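/- arXiv:2503.06715 — 6 statements merged into one kernel-verified Lean document; each statement's English description precedes it below -/
import Mathlib

section
/- Let R be a possibly non-unital associative ring and let E′ ⊆ R be a nonempty set of pairwise commuting idempotents closed under the operations e₁ ∨ e₂ := e₁ + e₂ - e₁*e₂ and e₁ ∧ e₂ := e₁*e₂. Then the union S := ⋃_{e ∈ E′} eRe, where eRe := { e*r*e : r ∈ R }, is a non-unital subring of R (it contains 0 and is closed under addition, negation, and multiplication), and E′ is a set of local units for S: for every x ∈ S there exists e ∈ E′ with e*x = x and x*e = x. -/
/-!
An element `x` lies in `eRe` exactly when `e` is a two-sided unit for `x`, so `S` is the set of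
elements having a two-sided unit in `E'` (`mem_iUnion_corner_iff`), which is the local unit
property. For commuting idempotents `e₁, e₂` the join `f = e₁ + e₂ - e₁ * e₂` satisfies
`f * eᵢ = eᵢ = eᵢ * f`, so `f` is a two-sided unit for everything that `e₁` or `e₂` is one for
(`exists_common_unit`). Any two elements of `S` therefore lie in a common corner `fRf`, which is
closed under the ring operations.
-/

/-- `S` consists of the elements that have a two-sided unit in `E'`. -/
theorem mem_iUnion_corner_iff {R : Type*} [NonUnitalRing R] {E' : Set R}
    (hidem : ∀ e ∈ E', e * e = e) (x : R) :
    x ∈ ⋃ e ∈ E', {x : R | ∃ r : R, x = e * r * e} ↔ ∃ e ∈ E', e * x = x ∧ x * e = x := by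
  simp only [Set.mem_iUnion, Set.mem_setOf_eq, exists_prop]
  constructor
  · rintro ⟨e, he, r, rfl⟩
    refine ⟨e, he, ?_, ?_⟩
    · rw [← mul_assoc, ← mul_assoc, hidem e he]
    · rw [mul_assoc, hidem e he]
  · rintro ⟨e, he, hl, hr⟩
    exact ⟨e, he, x, by rw [hl, hr]⟩

/-- The join of the local units of `x` and `y` is a local unit for both. -/
theorem exists_common_unit {R : Type*} [NonUnitalRing R] {E' : Set R}
    (hidem : ∀ e ∈ E', e * e = e)
    (hcomm : ∀ e₁ ∈ E', ∀ e₂ ∈ E', e₁ * e₂ = e₂ * e₁)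
    (hjoin : ∀ e₁ ∈ E', ∀ e₂ ∈ E', e₁ + e₂ - e₁ * e₂ ∈ E') {x y : R}
    (hx : ∃ e ∈ E', e * x = x ∧ x * e = x) (hy : ∃ e ∈ E', e * y = y ∧ y * e = y) :
    ∃ f ∈ E', (f * x = x ∧ x * f = x) ∧ (f * y = y ∧ y * f = y) := by
  obtain ⟨a, ha, hax, hxa⟩ := hx
  obtain ⟨b, hb, hby, hyb⟩ := hy
  have hf := hjoin a ha b hb
  have hfa : (a + b - a * b) * a = a := by
    rw [hcomm a ha b hb, sub_mul, add_mul, mul_assoc, hidem a ha, add_sub_cancel_right]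
  have hfb : (a + b - a * b) * b = b := by
    rw [sub_mul, add_mul, mul_assoc, hidem b hb, add_sub_cancel_left]
  have haf := (hcomm a ha _ hf).trans hfa
  have hbf := (hcomm b hb _ hf).trans hfb
  refine ⟨_, hf, ⟨?_, ?_⟩, ⟨?_, ?_⟩⟩
  · calc _ = (a + b - a * b) * (a * x) := by rw [hax]
      _ = x := by rw [← mul_assoc, hfa, hax]
  · calc _ = (x * a) * (a + b - a * b) := by rw [hxa]
      _ = x := by rw [mul_assoc, haf, hxa]
  · calc _ = (a + b - a * b) * (b * y) := by rw [hby]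
      _ = y := by rw [← mul_assoc, hfb, hby]
  · calc _ = (y * b) * (a + b - a * b) := by rw [hyb]
      _ = y := by rw [mul_assoc, hbf, hyb]

/-- If `E'` is a nonempty set of pairwise commuting idempotents of a
possibly non-unital ring `R`, closed under `e₁ ∨ e₂ = e₁ + e₂ - e₁*e₂` and
`e₁ ∧ e₂ = e₁*e₂`, then `S = ⋃_{e ∈ E'} eRe` is a non-unital subring of `R` and
`E'` is a set of local units for `S`. -/
theorem stmt_2 {R : Type*} [NonUnitalRing R] (E' : Set R) (hne : E'.Nonempty)
    (hidem : ∀ e ∈ E', e * e = e)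
    (hcomm : ∀ e₁ ∈ E', ∀ e₂ ∈ E', e₁ * e₂ = e₂ * e₁)
    (hjoin : ∀ e₁ ∈ E', ∀ e₂ ∈ E', e₁ + e₂ - e₁ * e₂ ∈ E')
    (hmeet : ∀ e₁ ∈ E', ∀ e₂ ∈ E', e₁ * e₂ ∈ E') :
    (0 : R) ∈ ⋃ e ∈ E', {x : R | ∃ r : R, x = e * r * e} ∧
    (∀ x ∈ ⋃ e ∈ E', {x : R | ∃ r : R, x = e * r * e},
      ∀ y ∈ ⋃ e ∈ E', {x : R | ∃ r : R, x = e * r * e},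
        x + y ∈ ⋃ e ∈ E', {x : R | ∃ r : R, x = e * r * e}) ∧
    (∀ x ∈ ⋃ e ∈ E', {x : R | ∃ r : R, x = e * r * e},
      -x ∈ ⋃ e ∈ E', {x : R | ∃ r : R, x = e * r * e}) ∧
    (∀ x ∈ ⋃ e ∈ E', {x : R | ∃ r : R, x = e * r * e},
      ∀ y ∈ ⋃ e ∈ E', {x : R | ∃ r : R, x = e * r * e},
        x * y ∈ ⋃ e ∈ E', {x : R | ∃ r : R, x = e * r * e}) ∧
    (∀ x ∈ ⋃ e ∈ E', {x : R | ∃ r : R, x = e * r * e},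
      ∃ e ∈ E', e * x = x ∧ x * e = x) := by
  simp only [mem_iUnion_corner_iff hidem]
  refine ⟨?_, ?_, ?_, ?_, fun x hx => hx⟩
  · obtain ⟨e, he⟩ := hne
    exact ⟨e, he, mul_zero e, zero_mul e⟩
  · intro x hx y hy
    obtain ⟨f, hf, ⟨hfx, hxf⟩, hfy, hyf⟩ := exists_common_unit hidem hcomm hjoin hx hy
    exact ⟨f, hf, by rw [mul_add, hfx, hfy], by rw [add_mul, hxf, hyf]⟩
  · rintro x ⟨e, he, hex, hxe⟩
    exact ⟨e, he, by rw [mul_neg, hex], by rw [neg_mul, hxe]⟩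
  · intro x hx y hy
    obtain ⟨f, hf, ⟨hfx, -⟩, -, hyf⟩ := exists_common_unit hidem hcomm hjoin hx hy
    exact ⟨f, hf, by rw [← mul_assoc, hfx], by rw [mul_assoc, hyf]⟩
end

section
/- Let Φ be a partial action of a group G on a generalized Boolean algebra B, with ideals (I_g)_{g ∈ G} and maps (φ_g)_{g ∈ G}, and let B₁ be an ideal of B. Define 𝔅 to be the set of all u ∈ B such that u = φ_{g₁}(v₁) ⊔ ⋯ ⊔ φ_{gₙ}(vₙ) for some n ≥ 1, elements g₁, …, gₙ ∈ G, and elements v₁, …, vₙ with vᵢ ∈ B₁ ∩ I_{gᵢ⁻¹} for each i. Then: (i) B₁ ⊆ 𝔅; (ii) 𝔅 is an ideal of B (downward closed and closed under binary joins); and (iii) for every g ∈ G and every x ∈ 𝔅 ∩ I_{g⁻¹}, one has φ_g(x) ∈ 𝔅 ∩ I_g. -/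
/-!
Call `φ_g(v)` with `v ∈ B₁ ∩ I_{g⁻¹}` a translate. The set in the theorem is the closure of the set
of translates under binary joins (`setOf_join_eq_supClosure`), so each claim follows by induction
on joins once it is known for single translates:

* an element below a translate is a translate, because `φ_g` is a meet-preserving bijection onto
  the ideal `I_g` (`translates_down`), and distributivity carries this over to joins;
* if a translate lies in `I_{g⁻¹}`, then its image under `φ_g` is a translate (`translates_map`):
  the domain condition on partial actions puts `v` in `I_{(gh)⁻¹}`, so
  `φ_g(φ_h(v)) = φ_{gh}(v)`.
-/

/-- A partial action of a group `G` on a generalized Boolean algebra `B`: a family of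
ideals `I g` of `B` together with maps `φ g : B → B` restricting to bijections from
`I g⁻¹` onto `I g` that preserve `⊥`, `⊓` and `⊔`, with `I 1 = B`, `φ 1 = id`,
`φ g (I g⁻¹ ∩ I h) = I g ∩ I (g*h)`, and `φ g ∘ φ h = φ (g*h)` where defined. -/
structure PartialActionGBA (G : Type*) [Group G] (B : Type*) [GeneralizedBooleanAlgebra B] where
  I : G → Set B
  φ : G → B → B
  I_nonempty : ∀ g, (I g).Nonempty
  I_down : ∀ g, ∀ a ∈ I g, ∀ b : B, b ≤ a → b ∈ I g
  I_sup : ∀ g, ∀ a ∈ I g, ∀ b ∈ I g, a ⊔ b ∈ I g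
  I_one : I 1 = Set.univ
  φ_one : ∀ x : B, φ 1 x = x
  φ_bijOn : ∀ g, Set.BijOn (φ g) (I g⁻¹) (I g)
  φ_bot : ∀ g, φ g ⊥ = ⊥
  φ_inf : ∀ g, ∀ x ∈ I g⁻¹, ∀ y ∈ I g⁻¹, φ g (x ⊓ y) = φ g x ⊓ φ g y
  φ_sup : ∀ g, ∀ x ∈ I g⁻¹, ∀ y ∈ I g⁻¹, φ g (x ⊔ y) = φ g x ⊔ φ g y
  φ_image : ∀ g h, φ g '' (I g⁻¹ ∩ I h) = I g ∩ I (g * h)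
  φ_comp : ∀ g h, ∀ x ∈ I h⁻¹ ∩ I (g * h)⁻¹, φ g (φ h x) = φ (g * h) x

namespace PartialActionGBA

variable {G B : Type*} [Group G] [GeneralizedBooleanAlgebra B] (P : PartialActionGBA G B)
  {B₁ : Set B}

/-- The elements `φ g v` with `v ∈ B₁` in the domain `I g⁻¹` of `φ g`. -/
def translates (B₁ : Set B) : Set B :=
  {w | ∃ g, ∃ v ∈ B₁ ∩ P.I g⁻¹, P.φ g v = w}

theorem subset_translates : B₁ ⊆ P.translates B₁ := by
  intro x hx
  exact ⟨1, x, ⟨hx, by simp [P.I_one]⟩, P.φ_one x⟩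

theorem translates_down (hdown : ∀ a ∈ B₁, ∀ b : B, b ≤ a → b ∈ B₁) {w b : B}
    (hw : w ∈ P.translates B₁) (hb : b ≤ w) : b ∈ P.translates B₁ := by
  obtain ⟨g, v, ⟨hv₁, hv⟩, rfl⟩ := hw
  obtain ⟨y, hy, rfl⟩ := (P.φ_bijOn g).surjOn (P.I_down g _ ((P.φ_bijOn g).mapsTo hv) b hb)
  refine ⟨g, y ⊓ v, ⟨hdown v hv₁ _ inf_le_right, P.I_down _ v hv _ inf_le_right⟩, ?_⟩
  rw [P.φ_inf g y hy v hv, inf_eq_left.2 hb]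

theorem translates_map {g : G} {w : B} (hw : w ∈ P.translates B₁) (hwg : w ∈ P.I g⁻¹) :
    P.φ g w ∈ P.translates B₁ := by
  obtain ⟨h, v, ⟨hv₁, hv⟩, rfl⟩ := hw
  -- `g⁻¹ = h * (g * h)⁻¹`, so the image condition for `h` and `(g * h)⁻¹` applies to `φ h v`.
  have hmem : P.φ h v ∈ P.I h ∩ P.I (h * (g * h)⁻¹) :=
    ⟨(P.φ_bijOn h).mapsTo hv, by simpa [mul_inv_rev] using hwg⟩
  rw [← P.φ_image] at hmem
  obtain ⟨v', ⟨hv', hv'gh⟩, heq⟩ := hmem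
  obtain rfl := (P.φ_bijOn h).injOn hv' hv heq
  exact ⟨g * h, v', ⟨hv₁, hv'gh⟩, (P.φ_comp g h v' ⟨hv, hv'gh⟩).symm⟩

theorem setOf_join_eq_supClosure (B₁ : Set B) :
    {u : B | ∃ n : ℕ, 0 < n ∧ ∃ (g : Fin n → G) (v : Fin n → B),
        (∀ i, v i ∈ B₁ ∩ P.I (g i)⁻¹) ∧
        u = Finset.univ.sup fun i => P.φ (g i) (v i)} = supClosure (P.translates B₁) := by
  ext u
  constructor
  · rintro ⟨n, hn, g, v, hv, rfl⟩
    have hne : (Finset.univ : Finset (Fin n)).Nonempty := ⟨⟨0, hn⟩, Finset.mem_univ _⟩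
    rw [← Finset.sup'_eq_sup hne]
    exact supClosed_supClosure.finsetSup'_mem hne fun i _ =>
      subset_supClosure ⟨g i, v i, hv i, rfl⟩
  · rintro ⟨t, ht, hts, rfl⟩
    choose g v hv hφ using fun i => hts (t.equivFin.symm i).2
    refine ⟨t.card, ht.card_pos, g, v, hv, ?_⟩
    simp only [hφ]
    rw [Finset.sup'_eq_sup]
    apply le_antisymm
    · refine Finset.sup_le fun b hb => ?_
      simpa using Finset.le_sup (f := fun i => (t.equivFin.symm i : B))
        (Finset.mem_univ (t.equivFin ⟨b, hb⟩))
    · exact Finset.sup_le fun i _ => Finset.le_sup (f := id) (t.equivFin.symm i).2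

theorem supClosure_translates_down (hdown : ∀ a ∈ B₁, ∀ b : B, b ≤ a → b ∈ B₁) {a : B}
    (ha : a ∈ supClosure (P.translates B₁)) :
    ∀ b ≤ a, b ∈ supClosure (P.translates B₁) := by
  have key : supClosure (P.translates B₁) ⊆ {a | ∀ b ≤ a, b ∈ supClosure (P.translates B₁)} := by
    refine supClosure_min
      (fun w hw b hb => subset_supClosure (P.translates_down hdown hw hb)) ?_
    intro x ihx y ihy b hb
    rw [← inf_eq_left.2 hb, inf_sup_left]
    exact supClosed_supClosure (ihx _ inf_le_right) (ihy _ inf_le_right)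
  exact key ha

theorem supClosure_translates_map {g : G} {x : B} (hx : x ∈ supClosure (P.translates B₁)) :
    x ∈ P.I g⁻¹ → P.φ g x ∈ supClosure (P.translates B₁) := by
  have key : supClosure (P.translates B₁) ⊆
      {x | x ∈ P.I g⁻¹ → P.φ g x ∈ supClosure (P.translates B₁)} := by
    refine supClosure_min (fun w hw hwg => subset_supClosure (P.translates_map hw hwg)) ?_
    intro x ihx y ihy hxy
    have hxg := P.I_down _ _ hxy x le_sup_left
    have hyg := P.I_down _ _ hxy y le_sup_right
    rw [P.φ_sup g x hxg y hyg]
    exact supClosed_supClosure (ihx hxg) (ihy hyg)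
  exact key hx

end PartialActionGBA

/-- Given a partial action of `G` on `B` and an ideal `B₁` of `B`, the set
`𝔅` of finite joins `φ_{g₁}(v₁) ⊔ ⋯ ⊔ φ_{gₙ}(vₙ)` with `n ≥ 1` and
`vᵢ ∈ B₁ ∩ I_{gᵢ⁻¹}` contains `B₁`, is an ideal of `B`, and is invariant in the sense
that `φ g` maps `𝔅 ∩ I g⁻¹` into `𝔅 ∩ I g`. -/
theorem stmt_5 {G B : Type*} [Group G] [GeneralizedBooleanAlgebra B]
    (P : PartialActionGBA G B) (B₁ : Set B)
    (hB₁ne : B₁.Nonempty)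
    (hB₁down : ∀ a ∈ B₁, ∀ b : B, b ≤ a → b ∈ B₁)
    (hB₁sup : ∀ a ∈ B₁, ∀ b ∈ B₁, a ⊔ b ∈ B₁) :
    B₁ ⊆ {u : B | ∃ n : ℕ, 0 < n ∧ ∃ (g : Fin n → G) (v : Fin n → B),
        (∀ i, v i ∈ B₁ ∩ P.I (g i)⁻¹) ∧
        u = Finset.univ.sup fun i => P.φ (g i) (v i)} ∧
    (∀ a ∈ {u : B | ∃ n : ℕ, 0 < n ∧ ∃ (g : Fin n → G) (v : Fin n → B),
        (∀ i, v i ∈ B₁ ∩ P.I (g i)⁻¹) ∧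
        u = Finset.univ.sup fun i => P.φ (g i) (v i)},
      ∀ b : B, b ≤ a →
        b ∈ {u : B | ∃ n : ℕ, 0 < n ∧ ∃ (g : Fin n → G) (v : Fin n → B),
          (∀ i, v i ∈ B₁ ∩ P.I (g i)⁻¹) ∧
          u = Finset.univ.sup fun i => P.φ (g i) (v i)}) ∧
    (∀ a ∈ {u : B | ∃ n : ℕ, 0 < n ∧ ∃ (g : Fin n → G) (v : Fin n → B),
        (∀ i, v i ∈ B₁ ∩ P.I (g i)⁻¹) ∧
        u = Finset.univ.sup fun i => P.φ (g i) (v i)},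
      ∀ b ∈ {u : B | ∃ n : ℕ, 0 < n ∧ ∃ (g : Fin n → G) (v : Fin n → B),
        (∀ i, v i ∈ B₁ ∩ P.I (g i)⁻¹) ∧
        u = Finset.univ.sup fun i => P.φ (g i) (v i)},
      a ⊔ b ∈ {u : B | ∃ n : ℕ, 0 < n ∧ ∃ (g : Fin n → G) (v : Fin n → B),
        (∀ i, v i ∈ B₁ ∩ P.I (g i)⁻¹) ∧
        u = Finset.univ.sup fun i => P.φ (g i) (v i)}) ∧
    (∀ g : G, ∀ x ∈ {u : B | ∃ n : ℕ, 0 < n ∧ ∃ (g' : Fin n → G) (v : Fin n → B),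
        (∀ i, v i ∈ B₁ ∩ P.I (g' i)⁻¹) ∧
        u = Finset.univ.sup fun i => P.φ (g' i) (v i)} ∩ P.I g⁻¹,
      P.φ g x ∈ {u : B | ∃ n : ℕ, 0 < n ∧ ∃ (g' : Fin n → G) (v : Fin n → B),
        (∀ i, v i ∈ B₁ ∩ P.I (g' i)⁻¹) ∧
        u = Finset.univ.sup fun i => P.φ (g' i) (v i)} ∩ P.I g) := by
  rw [P.setOf_join_eq_supClosure B₁]
  exact ⟨P.subset_translates.trans subset_supClosure,
    fun a ha => P.supClosure_translates_down hB₁down ha,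
    fun a ha b hb => supClosed_supClosure ha hb,
    fun g x hx => ⟨P.supClosure_translates_map hx.1 hx.2, (P.φ_bijOn g).mapsTo hx.2⟩⟩
end

section
/- Let Φ be a partial action of a group G on a generalized Boolean algebra B, with ideals (I_g)_{g ∈ G} and maps (φ_g)_{g ∈ G}, and let B₁ be an ideal of B. Suppose u ∈ B, n ≥ 1, g : Fin n → G, and v : Fin n → B satisfy v i ∈ B₁ ∩ I_{(g i)⁻¹} for every i and u ≤ ⨆_{i} φ_{g i}(v i). Then there exists v′ : Fin n → B with v′ i ∈ B₁ ∩ I_{(g i)⁻¹} and v′ i ≤ v i for every i, such that the elements φ_{g i}(v′ i) are pairwise disjoint (φ_{g i}(v′ i) ⊓ φ_{g j}(v′ j) = ⊥ for i ≠ j) and u = ⨆_{i} φ_{g i}(v′ i). -/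
/-- Every element below `φ g v` is the image of an element below `v`: meet an arbitrary preimage
with `v`. -/
theorem PartialActionGBA.exists_le_map_eq {G B : Type*} [Group G] [GeneralizedBooleanAlgebra B]
    (P : PartialActionGBA G B) {g : G} {v w : B} (hv : v ∈ P.I g⁻¹) (hw : w ≤ P.φ g v) :
    ∃ x ≤ v, P.φ g x = w := by
  obtain ⟨y, hy, rfl⟩ :=
    (P.φ_bijOn g).surjOn (P.I_down g _ ((P.φ_bijOn g).mapsTo hv) w hw)
  exact ⟨y ⊓ v, inf_le_right, by rw [P.φ_inf g y hy v hv, inf_eq_left.2 hw]⟩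

/-- If `u ≤ ⨆ i, φ_{g i}(v i)` with each `v i ∈ B₁ ∩ I (g i)⁻¹`, where `B₁`
is an ideal of `B`, then the `v i` can be shrunk to `v' i ∈ B₁ ∩ I (g i)⁻¹`, `v' i ≤ v i`,
so that the `φ_{g i}(v' i)` are pairwise disjoint with supremum exactly `u`. -/
theorem stmt_6 {G B : Type*} [Group G] [GeneralizedBooleanAlgebra B]
    (P : PartialActionGBA G B) (B₁ : Set B)
    (hB₁ne : B₁.Nonempty)
    (hB₁down : ∀ a ∈ B₁, ∀ b : B, b ≤ a → b ∈ B₁)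
    (hB₁sup : ∀ a ∈ B₁, ∀ b ∈ B₁, a ⊔ b ∈ B₁)
    (u : B) (n : ℕ) (hn : 1 ≤ n) (g : Fin n → G) (v : Fin n → B)
    (hv : ∀ i, v i ∈ B₁ ∩ P.I (g i)⁻¹)
    (hu : u ≤ Finset.univ.sup fun i => P.φ (g i) (v i)) :
    ∃ v' : Fin n → B,
      (∀ i, v' i ∈ B₁ ∩ P.I (g i)⁻¹ ∧ v' i ≤ v i) ∧
      (∀ i j, i ≠ j → P.φ (g i) (v' i) ⊓ P.φ (g j) (v' j) = ⊥) ∧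
      u = Finset.univ.sup fun i => P.φ (g i) (v' i) := by
  set a : Fin n → B := fun i => P.φ (g i) (v i) with ha
  have key : ∀ i, ∃ x ≤ v i, P.φ (g i) x = u ⊓ disjointed a i := fun i =>
    P.exists_le_map_eq (hv i).2 (inf_le_right.trans (disjointed_le a i))
  choose v' hle heq using key
  refine ⟨v', fun i => ⟨⟨hB₁down _ (hv i).1 _ (hle i), P.I_down _ _ (hv i).2 _ (hle i)⟩, hle i⟩,
    fun i j hij => ?_, ?_⟩
  · rw [heq, heq, ← disjoint_iff]
    exact (disjoint_disjointed a hij).mono inf_le_right inf_le_right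
  · simp only [heq]
    rw [← Finset.sup_inf_distrib_left, Fintype.sup_disjointed, inf_eq_left.2 hu]
end

section
/- Let Σ := ℕ ⊕ ℕ, write a n := Sum.inl n and b i := Sum.inr i, and define h : List ℕ → List Σ by h = List.flatMap w, where w n := [b 1, b 2, …, b n] ++ [a n] (the list of b i for i = 1, …, n followed by a n). Then for all α, β : List ℕ: if h α is a prefix of h β then α is a prefix of β; and if h α is a suffix of h β then α is a suffix of β. -/
/-- The letter `a n` of the enlarged alphabet `Σ = ℕ ⊕ ℕ`. -/
def aLetter (n : ℕ) : ℕ ⊕ ℕ := Sum.inl n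

/-- The letter `b i` of the enlarged alphabet `Σ = ℕ ⊕ ℕ`. -/
def bLetter (i : ℕ) : ℕ ⊕ ℕ := Sum.inr i

/-- The block `w n = [b 1, b 2, …, b n, a n]` replacing the letter `a n`. -/
def wBlock (n : ℕ) : List (ℕ ⊕ ℕ) :=
  ((List.range n).map fun i => bLetter (i + 1)) ++ [aLetter n]

/-- The substitution map `h` replacing each letter `a n` by its block. -/
def hMap : List ℕ → List (ℕ ⊕ ℕ) := fun l => l.flatMap wBlock

/-- Erasing every `b` letter and reading off the indices of the `a` letters is a left inverse
of `h`. As an erasure preserves prefixes and suffixes, `h` reflects both. -/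
theorem filterMap_getLeft_hMap (l : List ℕ) : (hMap l).filterMap Sum.getLeft? = l := by
  have hw (n : ℕ) : (wBlock n).filterMap Sum.getLeft? = [n] := by
    simp [wBlock, aLetter, bLetter, List.filterMap_append, List.filterMap_map, Function.comp_def]
  simp [hMap, List.filterMap_flatMap, hw]

/-- `h` reflects prefixes and suffixes: if `h α` is a prefix (resp. suffix)
of `h β`, then `α` is a prefix (resp. suffix) of `β`. -/
theorem stmt_9 (α β : List ℕ) :
    (hMap α <+: hMap β → α <+: β) ∧ (hMap α <:+ hMap β → α <:+ β) := by
  constructor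
  · intro H
    simpa only [filterMap_getLeft_hMap] using H.filterMap Sum.getLeft?
  · intro H
    simpa only [filterMap_getLeft_hMap] using H.filterMap Sum.getLeft?
end

section
/- Let f : V → V be a function and define the relation W on V by W u v := (f u = v ∨ f v = u). If u and v lie in the same weakly connected component of the functional graph of f, i.e. Relation.ReflTransGen W u v holds, then the forward orbits of u and v meet: there exist natural numbers m and n with f^[m] u = f^[n] v. -/
/-- If `u` and `v` lie in the same weakly connected component of the
functional graph of `f` (reflexive–transitive closure of the symmetrized edge relation),
then their forward orbits meet. -/
theorem stmt_10 {V : Type*} (f : V → V) (u v : V)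
    (h : Relation.ReflTransGen (fun a b => f a = b ∨ f b = a) u v) :
    ∃ m n : ℕ, f^[m] u = f^[n] v := by
  induction h with
  | refl => exact ⟨0, 0, rfl⟩
  | @tail b c _ hbc ih =>
    obtain ⟨m, n, hmn⟩ := ih
    rcases hbc with hbc | hcb
    -- Forward edge: apply `f` to both sides, and absorb it on the right as `f b = c`.
    · refine ⟨m + 1, n, ?_⟩
      rw [Function.iterate_succ_apply', hmn, ← Function.iterate_succ_apply' f,
        Function.iterate_succ_apply, hbc]
    -- Backward edge: the orbit of `c` reaches that of `b` one step later.
    · refine ⟨m, n + 1, ?_⟩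
      rw [hmn, Function.iterate_succ_apply, hcb]
end

section
/- Let V be a type, let 𝔅 be a collection of subsets of V containing ∅ and closed under binary unions, binary intersections, and set differences, and let X : ℕ → Set V be any family of subsets. Define 𝔅_F to be the collection of subsets S of ℕ × V of the form S = ⋃_{i ∈ F} ({i} ×ˢ (B i ∩ X i)) for some finite set F ⊆ ℕ and some family B : ℕ → Set V with B i ∈ 𝔅 for all i ∈ F. Then 𝔅_F contains ∅ and is closed under binary unions, binary intersections, and set differences. -/
/-!
A set belongs to `𝔅_F` exactly when its slice over each level `i` is `B i ∩ X i`, where now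
`B i ∈ 𝔅` for every `i` and `B i = ∅` outside a finite set: since `∅ ∈ 𝔅`, any family can be
replaced by `∅` off its index set (`mem_levels_iff`). With this normalization the set operations
act slicewise, since `(A ∩ X) ∪ (B ∩ X) = (A ∪ B) ∩ X`, and likewise for `∩` and `\`.
-/

/-- Membership in `𝔅_F` in terms of slices, with a family taking values in `𝔅` at every level and
vanishing outside a finite set of levels. -/
theorem mem_levels_iff {V : Type*} {𝔅 : Set (Set V)} (hempty : ∅ ∈ 𝔅) (X : ℕ → Set V)
    (S : Set (ℕ × V)) :
    S ∈ {S : Set (ℕ × V) | ∃ (F : Finset ℕ) (B : ℕ → Set V),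
        (∀ i ∈ F, B i ∈ 𝔅) ∧ S = ⋃ i ∈ F, ({i} ×ˢ (B i ∩ X i))} ↔
      ∃ (F : Finset ℕ) (B : ℕ → Set V), (∀ i, B i ∈ 𝔅) ∧ (∀ i ∉ F, B i = ∅) ∧
        ∀ i v, (i, v) ∈ S ↔ v ∈ B i ∧ v ∈ X i := by
  constructor
  · rintro ⟨F, B, hB, rfl⟩
    refine ⟨F, fun i => if i ∈ F then B i else ∅, fun i => ?_, fun i hi => by simp [hi],
      fun i v => ?_⟩
    · by_cases hi : i ∈ F <;> simp [hi, hB, hempty]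
    · by_cases hi : i ∈ F <;> simp [hi]
  · rintro ⟨F, B, hB, h0, hS⟩
    refine ⟨F, B, fun i _ => hB i, ?_⟩
    ext ⟨i, v⟩
    by_cases hi : i ∈ F
    · simp [hS, hi]
    · simp [hS, hi, h0 i hi]

/-- If `𝔅` is a collection of subsets of `V` containing `∅` and closed
under binary unions, intersections, and set differences, and `X : ℕ → Set V` is any
filtration, then the collection `𝔅_F` of finite disjoint-level unions
`⋃_{i ∈ F} {i} ×ˢ (B i ∩ X i)` (with `F` finite and `B i ∈ 𝔅` for `i ∈ F`) also
contains `∅` and is closed under binary unions, intersections, and set differences. -/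
theorem stmt_13 {V : Type*} (𝔅 : Set (Set V))
    (hempty : ∅ ∈ 𝔅)
    (hunion : ∀ A ∈ 𝔅, ∀ B ∈ 𝔅, A ∪ B ∈ 𝔅)
    (hinter : ∀ A ∈ 𝔅, ∀ B ∈ 𝔅, A ∩ B ∈ 𝔅)
    (hdiff : ∀ A ∈ 𝔅, ∀ B ∈ 𝔅, A \ B ∈ 𝔅)
    (X : ℕ → Set V) :
    (∅ : Set (ℕ × V)) ∈
      {S : Set (ℕ × V) | ∃ (F : Finset ℕ) (B : ℕ → Set V),
        (∀ i ∈ F, B i ∈ 𝔅) ∧ S = ⋃ i ∈ F, ({i} ×ˢ (B i ∩ X i))} ∧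
    (∀ S₁ ∈ {S : Set (ℕ × V) | ∃ (F : Finset ℕ) (B : ℕ → Set V),
        (∀ i ∈ F, B i ∈ 𝔅) ∧ S = ⋃ i ∈ F, ({i} ×ˢ (B i ∩ X i))},
      ∀ S₂ ∈ {S : Set (ℕ × V) | ∃ (F : Finset ℕ) (B : ℕ → Set V),
        (∀ i ∈ F, B i ∈ 𝔅) ∧ S = ⋃ i ∈ F, ({i} ×ˢ (B i ∩ X i))},
      S₁ ∪ S₂ ∈ {S : Set (ℕ × V) | ∃ (F : Finset ℕ) (B : ℕ → Set V),
        (∀ i ∈ F, B i ∈ 𝔅) ∧ S = ⋃ i ∈ F, ({i} ×ˢ (B i ∩ X i))}) ∧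
    (∀ S₁ ∈ {S : Set (ℕ × V) | ∃ (F : Finset ℕ) (B : ℕ → Set V),
        (∀ i ∈ F, B i ∈ 𝔅) ∧ S = ⋃ i ∈ F, ({i} ×ˢ (B i ∩ X i))},
      ∀ S₂ ∈ {S : Set (ℕ × V) | ∃ (F : Finset ℕ) (B : ℕ → Set V),
        (∀ i ∈ F, B i ∈ 𝔅) ∧ S = ⋃ i ∈ F, ({i} ×ˢ (B i ∩ X i))},
      S₁ ∩ S₂ ∈ {S : Set (ℕ × V) | ∃ (F : Finset ℕ) (B : ℕ → Set V),
        (∀ i ∈ F, B i ∈ 𝔅) ∧ S = ⋃ i ∈ F, ({i} ×ˢ (B i ∩ X i))}) ∧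
    (∀ S₁ ∈ {S : Set (ℕ × V) | ∃ (F : Finset ℕ) (B : ℕ → Set V),
        (∀ i ∈ F, B i ∈ 𝔅) ∧ S = ⋃ i ∈ F, ({i} ×ˢ (B i ∩ X i))},
      ∀ S₂ ∈ {S : Set (ℕ × V) | ∃ (F : Finset ℕ) (B : ℕ → Set V),
        (∀ i ∈ F, B i ∈ 𝔅) ∧ S = ⋃ i ∈ F, ({i} ×ˢ (B i ∩ X i))},
      S₁ \ S₂ ∈ {S : Set (ℕ × V) | ∃ (F : Finset ℕ) (B : ℕ → Set V),
        (∀ i ∈ F, B i ∈ 𝔅) ∧ S = ⋃ i ∈ F, ({i} ×ˢ (B i ∩ X i))}) := by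
  simp only [mem_levels_iff hempty]
  refine ⟨⟨∅, fun _ => ∅, fun _ => hempty, by simp, by simp⟩, ?_, ?_, ?_⟩
  · rintro S₁ ⟨F, B, hB, hF, hS⟩ S₂ ⟨G, C, hC, hG, hT⟩
    refine ⟨F ∪ G, fun i => B i ∪ C i, fun i => hunion _ (hB i) _ (hC i), fun i hi => ?_,
      fun i v => ?_⟩
    · rw [Finset.notMem_union] at hi
      simp [hF i hi.1, hG i hi.2]
    · simp only [Set.mem_union, hS, hT]
      tauto
  · rintro S₁ ⟨F, B, hB, hF, hS⟩ S₂ ⟨G, C, hC, hG, hT⟩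
    refine ⟨F, fun i => B i ∩ C i, fun i => hinter _ (hB i) _ (hC i),
      fun i hi => by simp [hF i hi], fun i v => ?_⟩
    simp only [Set.mem_inter_iff, hS, hT]
    tauto
  · rintro S₁ ⟨F, B, hB, hF, hS⟩ S₂ ⟨G, C, hC, hG, hT⟩
    refine ⟨F, fun i => B i \ C i, fun i => hdiff _ (hB i) _ (hC i),
      fun i hi => by simp [hF i hi], fun i v => ?_⟩
    simp only [Set.mem_sdiff, hS, hT]
    tauto
end
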